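/- arXiv:1612.02905 — 7 statements merged into one kernel-verified Lean document; each statement's English description precedes it below -/
import Mathlib

section
/- If two points p, q ∈ ℝ³ have equal third coordinates (p₃ = q₃), then the geodesic distance equals the Euclidean distance: d_g(p, q) = ‖p − q‖. -/
open Real MeasureTheory

noncomputable section

/-- `ℝ³` with the Euclidean norm. -/
abbrev E3 : Type := EuclideanSpace ℝ (Fin 3)

/-- The bump function `f(y) = A (1 + cos (π y))`. -/
def f (A y : ℝ) : ℝ := A * (1 + Real.cos (Real.pi * y))

/-- The g-length of a path `γ` in the perturbed metric:
`L_g(γ) = ∫₀¹ √(γ₁′(t)² + γ₂′(t)² + (1 + f(γ₂(t))) γ₃′(t)²) dt`. -/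
def Lg (A : ℝ) (γ : ℝ → E3) : ℝ :=
  ∫ t in (0:ℝ)..1,
    Real.sqrt ((deriv γ t 0) ^ 2 + (deriv γ t 1) ^ 2
      + (1 + f A (γ t 1)) * (deriv γ t 2) ^ 2)

/-- The geodesic distance: the infimum of g-lengths of C¹ paths from `p` to `q`. -/
def dg (A : ℝ) (p q : E3) : ℝ :=
  sInf {L : ℝ | ∃ γ : ℝ → E3,
    ContDiff ℝ 1 γ ∧ γ 0 = p ∧ γ 1 = q ∧ L = Lg A γ}

/-- A point of `ℝ³` from its three coordinates. -/
def pt (x y z : ℝ) : E3 := (EuclideanSpace.equiv (Fin 3) ℝ).symm ![x, y, z]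

/-- `a = 1/√2`. -/
def a : ℝ := 1 / Real.sqrt 2

/-- `ξ₀ = √(1 + f(0)) − 1`. -/
def ξ₀ (A : ℝ) : ℝ := Real.sqrt (1 + f A 0) - 1

/-- If `p₃ = q₃` then the geodesic distance equals the Euclidean distance. -/
theorem dg_eq_euclidean_of_equal_z (A : ℝ) (hA0 : 0 < A) (hA : A ≤ 3 / 8)
    (p q : E3) (h : p 2 = q 2) :
    dg A p q = ‖p - q‖ := by
  have hf : ∀ y, 0 ≤ f A y := by
    intro y
    unfold f
    have := Real.neg_one_le_cos (Real.pi * y)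
    exact mul_nonneg hA0.le (by linarith)
  unfold dg
  apply IsLeast.csInf_eq
  constructor
  · refine ⟨fun t => p + t • (q - p), by fun_prop, by simp, by simp, ?_⟩
    have hd : ∀ t : ℝ, deriv (fun t : ℝ => p + t • (q - p)) t = q - p := by
      intro t
      have h1 : HasDerivAt (fun t : ℝ => p + t • (q - p)) ((1:ℝ) • (q - p)) t :=
        ((hasDerivAt_id t).smul_const (q - p)).const_add p
      simpa using h1.deriv
    unfold Lg
    simp only [hd]
    rw [EuclideanSpace.norm_eq]
    simp [Fin.sum_univ_three, h]
    congr 1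
    ring
  · rintro L ⟨γ, hγ, h0, h1, rfl⟩
    have hc : Continuous (deriv γ) := hγ.continuous_deriv le_rfl
    have hγc : Continuous γ := hγ.continuous
    have hi : ∫ t in (0:ℝ)..1, deriv γ t = q - p := by
      rw [intervalIntegral.integral_deriv_eq_sub, h0, h1]
      · intro t _
        exact (hγ.differentiable one_ne_zero) t
      · exact hc.intervalIntegrable _ _
    rw [norm_sub_rev, ← hi]
    refine (intervalIntegral.norm_integral_le_integral_norm zero_le_one).trans ?_
    unfold Lg
    apply intervalIntegral.integral_mono_on zero_le_one
    · exact hc.norm.intervalIntegrable _ _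
    · apply Continuous.intervalIntegrable
      unfold f
      fun_prop
    · intro t _
      rw [EuclideanSpace.norm_eq]
      apply Real.sqrt_le_sqrt
      simp only [Fin.sum_univ_three, Real.norm_eq_abs, sq_abs]
      nlinarith [mul_nonneg (hf (γ t 1)) (sq_nonneg (deriv γ t 2))]
end
end

section
/- Let ε > 0, let u = (0, 0, aε) and v = (0, 0, −aε), and let 0 < y₀ ≤ 1. Then every C¹ path γ : [0,1] → ℝ³ from v to u whose second coordinate satisfies |γ₂(t)| ≤ y₀ for all t has g-length L_g(γ) ≥ 2aε√(1 + f(y₀)). -/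
open Real MeasureTheory

noncomputable section

/-- Any C¹ path from `v` to `u` staying in the slab `|y| ≤ y₀` has g-length at
least `2aε√(1 + f(y₀))`. -/
theorem length_lower_bound_in_slab (A : ℝ) (hA0 : 0 < A) (hA : A ≤ 3 / 8)
    (ε : ℝ) (hε : 0 < ε) (y₀ : ℝ) (hy₀ : 0 < y₀) (hy₀' : y₀ ≤ 1)
    (γ : ℝ → E3) (hγ : ContDiff ℝ 1 γ)
    (h0 : γ 0 = pt 0 0 (-(a * ε))) (h1 : γ 1 = pt 0 0 (a * ε))
    (hslab : ∀ t ∈ Set.Icc (0:ℝ) 1, |γ t 1| ≤ y₀) :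
    2 * a * ε * Real.sqrt (1 + f A y₀) ≤ Lg A γ := by
  have hd : Continuous (deriv γ) := hγ.continuous_deriv le_rfl
  have hc : ∀ i : Fin 3, Continuous fun t => deriv γ t i := fun i =>
    (EuclideanSpace.proj (𝕜 := ℝ) i).continuous.comp hd
  have hcγ : ∀ i : Fin 3, Continuous fun t => γ t i := fun i =>
    (EuclideanSpace.proj (𝕜 := ℝ) i).continuous.comp hγ.continuous
  have hder : ∀ t, HasDerivAt (fun s => γ s 2) (deriv γ t 2) t := fun t =>
    ((EuclideanSpace.proj (𝕜 := ℝ) (2 : Fin 3)).hasFDerivAt.comp_hasDerivAt t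
      ((hγ.differentiable one_ne_zero) t).hasDerivAt)
  have hint : ∫ t in (0:ℝ)..1, deriv γ t 2 = 2 * a * ε := by
    rw [intervalIntegral.integral_eq_sub_of_hasDerivAt (fun t _ => hder t)
      ((hc 2).intervalIntegrable 0 1), h0, h1]
    simp [pt]
    ring
  have hcos : ∀ y : ℝ, |y| ≤ y₀ → f A y₀ ≤ f A y := by
    intro y hy
    have h : Real.cos (Real.pi * y₀) ≤ Real.cos (Real.pi * y) := by
      rw [← Real.cos_abs (Real.pi * y), abs_mul, abs_of_pos Real.pi_pos]
      apply Real.cos_le_cos_of_nonneg_of_le_pi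
      · positivity
      · nlinarith [Real.pi_pos]
      · exact mul_le_mul_of_nonneg_left hy Real.pi_pos.le
    unfold f
    exact mul_le_mul_of_nonneg_left (by linarith) hA0.le
  have hf0 : 0 ≤ f A y₀ := by
    unfold f
    exact mul_nonneg hA0.le (by linarith [Real.neg_one_le_cos (Real.pi * y₀)])
  rw [← hint, ← intervalIntegral.integral_mul_const]
  unfold Lg
  have c0 := hc 0
  have c1 := hc 1
  have c2 := hc 2
  have c3 := hcγ 1
  apply intervalIntegral.integral_mono_on zero_le_one
  · exact (c2.mul continuous_const).intervalIntegrable 0 1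
  · apply Continuous.intervalIntegrable
    unfold f
    fun_prop
  · intro t ht
    apply Real.le_sqrt_of_sq_le
    rw [mul_pow, Real.sq_sqrt (by linarith)]
    nlinarith [hcos _ (hslab t ht), sq_nonneg (deriv γ t 0), sq_nonneg (deriv γ t 1),
      mul_nonneg (sub_nonneg.2 (hcos _ (hslab t ht))) (sq_nonneg (deriv γ t 2))]
end
end

section
/- Let ε > 0, let u = (0, 0, aε) and v = (0, 0, −aε), and let 0 < y₀ ≤ 1. Then d_g(v, u) ≥ min(2aε√(1 + f(y₀)), 2y₀): every path joining v and u either stays in the slab |y| ≤ y₀, in which case its g-length is at least 2aε√(1 + f(y₀)), or it leaves the slab, in which case its g-length is at least 2y₀. -/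
open Real MeasureTheory

noncomputable section

theorem aux_lower (A : ℝ) (hA0 : 0 < A)
    (ε : ℝ) (y₀ : ℝ) (hy₀' : y₀ ≤ 1)
    (γ : ℝ → E3) (hγ : ContDiff ℝ 1 γ) (h0 : γ 0 = pt 0 0 (-(a * ε)))
    (h1 : γ 1 = pt 0 0 (a * ε)) :
    min (2 * a * ε * Real.sqrt (1 + f A y₀)) (2 * y₀) ≤ Lg A γ := by
  have hfnn : ∀ y, 0 ≤ f A y := fun y => by
    unfold f
    have := Real.neg_one_le_cos (Real.pi * y)
    exact mul_nonneg hA0.le (by linarith)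
  have hd : ∀ t, HasDerivAt γ (deriv γ t) t := fun t =>
    (hγ.differentiable (by norm_num) t).hasDerivAt
  have hdi : ∀ (i : Fin 3) t, HasDerivAt (fun s => γ s i) (deriv γ t i) t := fun i t =>
    ((EuclideanSpace.proj (𝕜 := ℝ) i : E3 →L[ℝ] ℝ).hasFDerivAt.comp_hasDerivAt t (hd t))
  have hc : Continuous (deriv γ) := hγ.continuous_deriv (by norm_num)
  have hci : ∀ i : Fin 3, Continuous (fun t => deriv γ t i) := fun i =>
    (EuclideanSpace.proj (𝕜 := ℝ) i : E3 →L[ℝ] ℝ).continuous.comp hc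
  have hgi : ∀ i : Fin 3, Continuous (fun t => γ t i) := fun i =>
    (EuclideanSpace.proj (𝕜 := ℝ) i : E3 →L[ℝ] ℝ).continuous.comp hγ.continuous
  have hg1 := hgi 1
  have hc0 := hci 0
  have hc1 := hci 1
  have hc2 := hci 2
  have hI : Continuous (fun t => Real.sqrt ((deriv γ t 0) ^ 2 + (deriv γ t 1) ^ 2
      + (1 + f A (γ t 1)) * (deriv γ t 2) ^ 2)) := by
    unfold f
    fun_prop
  have ftc : ∀ (i : Fin 3) (p q : ℝ), ∫ t in p..q, deriv γ t i = γ q i - γ p i := fun i p q =>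
    intervalIntegral.integral_eq_sub_of_hasDerivAt (fun t _ => hdi i t)
      ((hci i).intervalIntegrable _ _)
  have e01 : γ 0 1 = 0 := by rw [h0]; simp [pt]
  have e11 : γ 1 1 = 0 := by rw [h1]; simp [pt]
  have e02 : γ 0 2 = -(a * ε) := by rw [h0]; simp [pt]
  have e12 : γ 1 2 = a * ε := by rw [h1]; simp [pt]
  unfold Lg
  by_cases H : ∀ t ∈ Set.Icc (0:ℝ) 1, |γ t 1| ≤ y₀
  · refine (min_le_left _ _).trans ?_
    have e : 2 * a * ε * Real.sqrt (1 + f A y₀)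
        = ∫ t in (0:ℝ)..1, Real.sqrt (1 + f A y₀) * deriv γ t 2 := by
      rw [intervalIntegral.integral_const_mul, ftc, e02, e12]; ring
    rw [e]
    apply intervalIntegral.integral_mono_on zero_le_one
      ((continuous_const.mul hc2).intervalIntegrable _ _) (hI.intervalIntegrable _ _)
    intro t ht
    apply Real.le_sqrt_of_sq_le
    have hf : f A y₀ ≤ f A (γ t 1) := by
      unfold f
      have : Real.cos (Real.pi * y₀) ≤ Real.cos (Real.pi * γ t 1) := by
        rw [← Real.cos_abs (Real.pi * γ t 1), abs_mul, abs_of_pos Real.pi_pos]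
        apply Real.cos_le_cos_of_nonneg_of_le_pi
        · positivity
        · nlinarith [Real.pi_pos]
        · exact mul_le_mul_of_nonneg_left (H t ht) Real.pi_pos.le
      exact mul_le_mul_of_nonneg_left (by linarith) hA0.le
    change (Real.sqrt (1 + f A y₀) * deriv γ t 2) ^ 2 ≤ _
    rw [mul_pow, Real.sq_sqrt (by linarith [hfnn y₀])]
    have := mul_le_mul_of_nonneg_right hf (sq_nonneg (deriv γ t 2))
    nlinarith [sq_nonneg (deriv γ t 0), sq_nonneg (deriv γ t 1)]
  · push Not at H
    obtain ⟨t₀, ht, hlt⟩ := H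
    refine (min_le_right _ _).trans ?_
    have key : ∀ p q : ℝ, p ≤ q → |γ q 1 - γ p 1| ≤ ∫ t in p..q,
        Real.sqrt ((deriv γ t 0) ^ 2 + (deriv γ t 1) ^ 2
          + (1 + f A (γ t 1)) * (deriv γ t 2) ^ 2) := by
      intro p q hpq
      rw [← ftc 1 p q]
      refine (intervalIntegral.abs_integral_le_integral_abs hpq).trans ?_
      apply intervalIntegral.integral_mono_on hpq
        (hc1.abs.intervalIntegrable _ _) (hI.intervalIntegrable _ _)
      intro t _
      apply Real.abs_le_sqrt
      have := mul_nonneg (by linarith [hfnn (γ t 1)] : 0 ≤ 1 + f A (γ t 1))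
        (sq_nonneg (deriv γ t 2))
      nlinarith [sq_nonneg (deriv γ t 0)]
    have k1 := key 0 t₀ ht.1
    have k2 := key t₀ 1 ht.2
    rw [← intervalIntegral.integral_add_adjacent_intervals
      (hI.intervalIntegrable 0 t₀) (hI.intervalIntegrable t₀ 1)]
    rw [e01, sub_zero] at k1
    rw [e11, zero_sub, abs_neg] at k2
    linarith

/-- `d_g(v, u) ≥ min(2aε√(1 + f(y₀)), 2y₀)`. -/
theorem dg_uv_lower_bound (A : ℝ) (hA0 : 0 < A) (hA : A ≤ 3 / 8)
    (ε : ℝ) (hε : 0 < ε) (y₀ : ℝ) (hy₀ : 0 < y₀) (hy₀' : y₀ ≤ 1) :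
    min (2 * a * ε * Real.sqrt (1 + f A y₀)) (2 * y₀)
      ≤ dg A (pt 0 0 (-(a * ε))) (pt 0 0 (a * ε)) := by
  unfold dg
  apply le_csInf
  · refine ⟨_, fun t => pt 0 0 (-(a * ε)) + t • (pt 0 0 (a * ε) - pt 0 0 (-(a * ε))),
      ?_, ?_, ?_, rfl⟩
    · fun_prop
    · simp
    · simp
  · rintro L ⟨γ, hγ, h0, h1, rfl⟩
    exact aux_lower A hA0 ε y₀ hy₀' γ hγ h0 h1
end
end

section
/- There exists ε₀ > 0 such that for all ε with 0 < ε < ε₀, the points u = (0, 0, aε) and v = (0, 0, −aε) satisfy d_g(v, u) = 2aε√(1 + f(0)); that is, for sufficiently small ε the straight segment along the z-axis is a minimising path between v and u. -/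
open Real MeasureTheory

noncomputable section

lemma aux_int (g g' F : ℝ → ℝ) (hg : ∀ t, HasDerivAt g (g' t) t) (hc : Continuous g')
    (hF : Continuous F) (hb : ∀ t ∈ Set.Icc (0:ℝ) 1, |g' t| ≤ F t) (t : ℝ)
    (ht : t ∈ Set.Icc (0:ℝ) 1) : |g t - g 0| ≤ ∫ s in (0:ℝ)..1, F s := by
  have h1 : ∫ s in (0:ℝ)..t, g' s = g t - g 0 :=
    intervalIntegral.integral_eq_sub_of_hasDerivAt (fun s _ => hg s) (hc.intervalIntegrable _ _)
  rw [← h1]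
  have h2 : |∫ s in (0:ℝ)..t, g' s| ≤ ∫ s in (0:ℝ)..t, |g' s| :=
    intervalIntegral.abs_integral_le_integral_abs ht.1
  have h3 : ∫ s in (0:ℝ)..t, |g' s| ≤ ∫ s in (0:ℝ)..t, F s :=
    intervalIntegral.integral_mono_on ht.1 (hc.abs.intervalIntegrable _ _)
      (hF.intervalIntegrable _ _) (fun x hx => hb x ⟨hx.1, hx.2.trans ht.2⟩)
  have h4 : 0 ≤ ∫ s in t..1, F s :=
    intervalIntegral.integral_nonneg ht.2
      (fun x hx => (abs_nonneg _).trans (hb x ⟨ht.1.trans hx.1, hx.2⟩))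
  have h5 := intervalIntegral.integral_add_adjacent_intervals
    (hF.intervalIntegrable (μ := volume) 0 t) (hF.intervalIntegrable (μ := volume) t 1)
  linarith

lemma f_zero (A : ℝ) : f A 0 = 2 * A := by
  unfold f; simp; ring

lemma f_nonneg (A y : ℝ) (hA : 0 < A) : 0 ≤ f A y := by
  unfold f
  have := Real.neg_one_le_cos (π * y)
  exact mul_nonneg hA.le (by linarith)

lemma f_le (A y : ℝ) (hA : 0 < A) : f A y ≤ 2 * A := by
  unfold f
  have := Real.cos_le_one (π * y)
  nlinarith

lemma f_ge (A y : ℝ) (hA : 0 < A) : 2 * A - A * π ^ 2 / 2 * y ^ 2 ≤ f A y := by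
  unfold f
  have := Real.one_sub_sq_div_two_le_cos (x := π * y)
  nlinarith

lemma alg (c k l y z G p q r : ℝ) (hc : 1 ≤ c) (hk : 0 < k) (hk2 : k ≤ 2) (hl : c * l = 2 * k)
    (hy : |y| ≤ 1 / 5) (hz : |z| ≤ 1 / 5) (hG1 : 1 ≤ G) (hG2 : G ≤ 2)
    (hG : c ^ 2 - k * y ^ 2 ≤ G) :
    |(c - l * y ^ 2 / 2) * r - l * z * y * q| ≤ Real.sqrt (p ^ 2 + q ^ 2 + G * r ^ 2) := by
  have hy2 : y ^ 2 ≤ 1 / 25 := by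
    have := sq_le_sq' (by linarith [abs_nonneg y]) hy
    rw [sq_abs] at this; linarith
  have hz2 : z ^ 2 ≤ 1 / 25 := by
    have := sq_le_sq' (by linarith [abs_nonneg z]) hz
    rw [sq_abs] at this; linarith
  have hl0 : 0 ≤ l := by
    by_contra h
    push Not at h
    nlinarith
  have hl2 : l ≤ 2 * k := by nlinarith
  have hll : l ^ 2 ≤ 8 * k := by nlinarith
  have key0 : 2 * l ^ 2 * z ^ 2 + l ^ 2 * y ^ 2 / 4 ≤ k := by
    have h1 : l ^ 2 * z ^ 2 ≤ 8 * k * (1 / 25) := by gcongr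
    have h2 : l ^ 2 * y ^ 2 ≤ 8 * k * (1 / 25) := by gcongr
    nlinarith
  have key : l ^ 2 * z ^ 2 * y ^ 2 * G + (c - l * y ^ 2 / 2) ^ 2 ≤ G := by
    have h1 : l ^ 2 * z ^ 2 * y ^ 2 * G ≤ l ^ 2 * z ^ 2 * y ^ 2 * 2 := by gcongr
    have h2 := mul_le_mul_of_nonneg_right key0 (sq_nonneg y)
    have h3 : (c - l * y ^ 2 / 2) ^ 2 = c ^ 2 - 2 * k * y ^ 2 + l ^ 2 * y ^ 2 / 4 * y ^ 2 := by
      rw [← hl]; ring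
    nlinarith
  apply Real.abs_le_sqrt
  set b := c - l * y ^ 2 / 2
  set d := l * z * y with hd
  have key' : d ^ 2 * G + b ^ 2 ≤ G := by
    have : d ^ 2 * G = l ^ 2 * z ^ 2 * y ^ 2 * G := by rw [hd]; ring
    linarith
  -- Cauchy-Schwarz, multiplied by G
  have h : G * (b * r - d * q) ^ 2 ≤ G * (q ^ 2 + G * r ^ 2) := by
    have e : (q ^ 2 + G * r ^ 2) * (d ^ 2 * G + b ^ 2) - G * (b * r - d * q) ^ 2
        = (q * b + G * r * d) ^ 2 := by ring
    have h0 : 0 ≤ q ^ 2 + G * r ^ 2 := by positivity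
    have := mul_le_mul_of_nonneg_left key' h0
    nlinarith [sq_nonneg (q * b + G * r * d)]
  have := le_of_mul_le_mul_left h (by linarith)
  nlinarith [sq_nonneg p]

lemma lower (A : ℝ) (hA0 : 0 < A) (hA : A ≤ 3 / 8) (m : ℝ) (hm : 0 ≤ m) (hm2 : m ≤ 1 / 40)
    (γ : ℝ → E3) (hγ : ContDiff ℝ 1 γ) (h0 : γ 0 = pt 0 0 (-m)) (h1 : γ 1 = pt 0 0 m) :
    2 * m * Real.sqrt (1 + f A 0) ≤ Lg A γ := by
  by_contra hlt
  push Not at hlt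
  have hd : ∀ (i : Fin 3) t, HasDerivAt (fun s => γ s i) (deriv γ t i) t := by
    intro i t
    have := (hγ.differentiable (by norm_num) t).hasDerivAt
    exact (EuclideanSpace.proj (𝕜 := ℝ) i).hasFDerivAt.comp_hasDerivAt t this
  have hdc : ∀ i : Fin 3, Continuous (fun t => deriv γ t i) := by
    intro i
    have := hγ.continuous_deriv (by norm_num)
    exact (EuclideanSpace.proj (𝕜 := ℝ) i).continuous.comp this
  have hcc : ∀ i : Fin 3, Continuous (fun t => γ t i) := by
    intro i
    exact (EuclideanSpace.proj (𝕜 := ℝ) i).continuous.comp hγ.continuous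
  have d0 := hdc 0
  have d1 := hdc 1
  have d2 := hdc 2
  have c1 := hcc 1
  have c2 := hcc 2
  have hF : Continuous (fun t => Real.sqrt ((deriv γ t 0) ^ 2 + (deriv γ t 1) ^ 2
      + (1 + f A (γ t 1)) * (deriv γ t 2) ^ 2)) := by
    unfold f
    fun_prop
  have y0 : γ 0 1 = 0 := by rw [h0]; simp [pt]
  have z0 : γ 0 2 = -m := by rw [h0]; simp [pt]
  have y1 : γ 1 1 = 0 := by rw [h1]; simp [pt]
  have z1 : γ 1 2 = m := by rw [h1]; simp [pt]
  rw [f_zero] at hlt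
  set c := Real.sqrt (1 + 2 * A) with hcdef
  have hcsq : c ^ 2 = 1 + 2 * A := Real.sq_sqrt (by linarith)
  have hc1 : 1 ≤ c := by
    rw [hcdef]; exact Real.one_le_sqrt.mpr (by linarith)
  have hc2 : c ≤ 2 := by nlinarith
  have hL : Lg A γ ≤ 1 / 10 := by nlinarith
  have hy : ∀ t ∈ Set.Icc (0:ℝ) 1, |γ t 1| ≤ 1 / 5 := by
    intro t ht
    have := aux_int _ _ _ (hd 1) d1 hF (fun s _ => Real.abs_le_sqrt (by
      have := f_nonneg A (γ s 1) hA0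
      have : 0 ≤ (1 + f A (γ s 1)) * (deriv γ s 2) ^ 2 := by positivity
      nlinarith [sq_nonneg (deriv γ s 0)])) t ht
    rw [y0, sub_zero] at this
    exact this.trans (by change Lg A γ ≤ _; linarith)
  have hz : ∀ t ∈ Set.Icc (0:ℝ) 1, |γ t 2| ≤ 1 / 5 := by
    intro t ht
    have := aux_int _ _ _ (hd 2) d2 hF (fun s _ => Real.abs_le_sqrt (by
      have := f_nonneg A (γ s 1) hA0
      nlinarith [sq_nonneg (deriv γ s 0), sq_nonneg (deriv γ s 1),
        mul_nonneg this (sq_nonneg (deriv γ s 2))])) t ht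
    rw [z0] at this
    have h' : |γ t 2 - -m| ≤ 1 / 10 := this.trans (by change Lg A γ ≤ _; linarith)
    rw [abs_le] at h' ⊢
    constructor <;> linarith [h'.1, h'.2]
  have hpi : π ^ 2 ≤ 10 := by nlinarith [Real.pi_lt_d2, Real.pi_pos]
  have hpi0 : 0 < π ^ 2 := by positivity
  set k := A * π ^ 2 / 2 with hk
  have hk0 : 0 < k := by positivity
  have hk2 : k ≤ 2 := by rw [hk]; nlinarith
  set l := 2 * k / c with hl
  have hcl : c * l = 2 * k := by rw [hl]; field_simp
  have main := aux_int (fun t => c * γ t 2 - l * γ t 2 * (γ t 1) ^ 2 / 2)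
    (fun t => (c - l * (γ t 1) ^ 2 / 2) * deriv γ t 2 - l * γ t 2 * γ t 1 * deriv γ t 1)
    _ (by
      intro t
      have := ((hd 2 t).const_mul c).sub
        ((((hd 2 t).const_mul l).mul ((hd 1 t).pow 2)).div_const 2)
      refine this.congr_deriv ?_
      simp
      ring) (by fun_prop) hF (by
      intro t ht
      refine alg c k l _ _ _ _ _ _ hc1 hk0 hk2 hcl (hy t ht) (hz t ht) ?_ ?_ ?_
      · linarith [f_nonneg A (γ t 1) hA0]
      · linarith [f_le A (γ t 1) hA0]
      · have := f_ge A (γ t 1) hA0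
        rw [← hk] at this
        rw [hcsq]; linarith) 1 (by simp)
  simp only [y0, y1, z0, z1] at main
  have h3 := (le_abs_self _).trans main
  change _ ≤ Lg A γ at h3
  nlinarith

lemma upper (A : ℝ) (m : ℝ) (hm : 0 ≤ m) :
    ∃ γ : ℝ → E3, ContDiff ℝ 1 γ ∧ γ 0 = pt 0 0 (-m) ∧ γ 1 = pt 0 0 m ∧
      2 * m * Real.sqrt (1 + f A 0) = Lg A γ := by
  refine ⟨fun t => pt 0 0 (-m) + t • pt 0 0 (2 * m), by fun_prop, by simp, ?_, ?_⟩
  · ext i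
    fin_cases i <;> simp [pt]
    ring
  · have hd : ∀ t : ℝ, deriv (fun t : ℝ => pt 0 0 (-m) + t • pt 0 0 (2 * m)) t
        = pt 0 0 (2 * m) := by
      intro t
      have := ((hasDerivAt_id t).smul_const (pt 0 0 (2 * m))).const_add (pt 0 0 (-m))
      simpa using this.deriv
    unfold Lg
    simp only [hd]
    simp [pt]
    rw [Real.sqrt_mul' _ (sq_nonneg _), Real.sqrt_sq (by positivity)]
    ring

/-- For sufficiently small `ε`, `d_g(v, u) = 2aε√(1 + f(0))`: the straight
segment along the `z`-axis is a minimising path between `v` and `u`. -/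
theorem dg_uv_eq_for_small_eps (A : ℝ) (hA0 : 0 < A) (hA : A ≤ 3 / 8) :
    ∃ ε₀ > (0:ℝ), ∀ ε : ℝ, 0 < ε → ε < ε₀ →
      dg A (pt 0 0 (-(a * ε))) (pt 0 0 (a * ε))
        = 2 * a * ε * Real.sqrt (1 + f A 0) := by
  refine ⟨1 / 40, by norm_num, fun ε h1 h2 => ?_⟩
  have ha0 : 0 ≤ a := by unfold a; positivity
  have ha1 : a ≤ 1 := by
    unfold a
    rw [div_le_one (by positivity)]
    exact Real.one_le_sqrt.mpr (by norm_num)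
  have hm : 0 ≤ a * ε := by positivity
  have hm2 : a * ε ≤ 1 / 40 := by nlinarith
  rw [mul_assoc 2 a ε]
  refine IsLeast.csInf_eq ⟨upper A _ hm, ?_⟩
  rintro L ⟨γ, hγ, h3, h4, rfl⟩
  exact lower A hA0 hA _ hm hm2 γ hγ h3 h4
end
end

section
/- Let ε and b satisfy 0 < ε ≤ 1 and 0 < b ≤ a/2, and let u = (0, 0, aε) and c = (0, bε, 0). Then d_g(u, c) < ε; that is, the circumradius of the constructed configuration is smaller than the sampling parameter ε. (This uses f(0) ≤ 3/4, a² = 1/2, and b² ≤ 1/8.) -/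
open Real MeasureTheory

noncomputable section

/-- For `0 < b ≤ a/2`, the circumradius is smaller than the sampling
parameter: `d_g(u, c) < ε`. -/
theorem circumradius_lt_eps (A : ℝ) (hA0 : 0 < A) (hA : A ≤ 3 / 8)
    (ε b : ℝ) (hε0 : 0 < ε) (hε1 : ε ≤ 1) (hb : 0 < b) (hba : b ≤ a / 2) :
    dg A (pt 0 0 (a * ε)) (pt 0 (b * ε) 0) < ε := by
  have ha2 : a ^ 2 = 1 / 2 := by
    unfold a
    rw [div_pow, Real.sq_sqrt (by norm_num)]; norm_num
  have ha0 : 0 < a := by unfold a; positivity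
  have hb2 : b ^ 2 ≤ 1 / 8 := by nlinarith
  have hb1 : b < 1 := by nlinarith
  set u := pt 0 0 (a * ε) with hu
  set c := pt 0 (b * ε) 0 with hc
  let γ : ℝ → E3 := fun t => u + t • (c - u)
  have hγd : ∀ t, deriv γ t = c - u := by
    intro t
    have h : HasDerivAt γ ((1:ℝ) • (c - u)) t :=
      ((hasDerivAt_id t).smul_const (c - u)).const_add u
    rw [h.deriv, one_smul]
  have h0 : (c - u) 0 = 0 := by simp [hu, hc, pt]
  have h1 : (c - u) 1 = b * ε := by simp [hu, hc, pt]
  have h2 : (c - u) 2 = -(a * ε) := by simp [hu, hc, pt]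
  have hγ1 : ∀ t, γ t 1 = t * (b * ε) := by
    intro t
    have : γ t 1 = u 1 + t * (c - u) 1 := by simp [γ]
    rw [this, h1]; simp [hu, pt]
  have hfle : ∀ y, f A y ≤ 3 / 4 := by
    intro y
    unfold f
    nlinarith [Real.cos_le_one (Real.pi * y)]
  have key : Lg A γ < ε := by
    have hL : Lg A γ = ∫ t in (0:ℝ)..1,
        Real.sqrt ((b * ε) ^ 2 + (1 + f A (t * (b * ε))) * (a * ε) ^ 2) := by
      unfold Lg
      congr 1
      funext t
      rw [hγd, h0, h1, h2, hγ1]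
      congr 1
      ring
    have hε : ε = ∫ _t in (0:ℝ)..1, ε := by simp
    rw [hL]
    conv_rhs => rw [hε]
    apply intervalIntegral.integral_lt_integral_of_continuousOn_of_le_of_exists_lt
      one_pos
    · apply Continuous.continuousOn
      unfold f
      fun_prop
    · exact continuousOn_const
    · intro t _
      apply Real.sqrt_le_iff.2 ⟨hε0.le, ?_⟩
      have := hfle (t * (b * ε))
      have e2 : 0 < ε ^ 2 := by positivity
      rw [mul_pow, mul_pow, ha2]
      nlinarith
    · refine ⟨1, by simp, ?_⟩
      rw [Real.sqrt_lt' hε0, one_mul]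
      have hlt : f A (b * ε) < 3 / 4 := by
        have hbe : 0 < b * ε := by positivity
        have hbe1 : b * ε < 1 := by nlinarith
        have hcos : Real.cos (Real.pi * (b * ε)) < 1 := by
          rw [← Real.cos_zero]
          apply Real.cos_lt_cos_of_nonneg_of_le_pi le_rfl
          · nlinarith [Real.pi_pos]
          · positivity
        unfold f
        nlinarith
      have e2 : 0 < ε ^ 2 := by positivity
      rw [mul_pow, mul_pow, ha2]
      nlinarith
  refine lt_of_le_of_lt (csInf_le ⟨0, ?_⟩ ⟨γ, ?_, ?_, ?_, rfl⟩) key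
  · rintro L ⟨g, -, -, -, rfl⟩
    exact intervalIntegral.integral_nonneg zero_le_one fun t _ => Real.sqrt_nonneg _
  · fun_prop
  · simp [γ]
  · simp [γ]
end
end

section
/- There exists ε₀ > 0 such that for all ε with 0 < ε < ε₀ and all ξ with 0 ≤ ξ < ξ₀, the points u = (0, 0, aε), v = (0, 0, −aε), w = (aε(1 + ξ), 0, 0), p = (−aε(1 + ξ), 0, 0) satisfy d_g(p, w) < d_g(u, v); that is, the geodesic distance between the two points on the x-axis is strictly smaller than the geodesic distance between the two points on the z-axis. -/
open Real MeasureTheory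

noncomputable section

theorem le_of_sq_le_sq_aux {x y : ℝ} (h : x ^ 2 ≤ y ^ 2) (hy : 0 ≤ y) : x ≤ y :=
  abs_le_of_sq_le_sq' h hy |>.2

theorem coord_deriv {γ : ℝ → E3} (h : ContDiff ℝ 1 γ) (i : Fin 3) (t : ℝ) :
    HasDerivAt (fun t => γ t i) (deriv γ t i) t := by
  have h1 : HasDerivAt γ (deriv γ t) t :=
    ((h.differentiable (by norm_num)) t).hasDerivAt
  exact (EuclideanSpace.proj i : E3 →L[ℝ] ℝ).hasFDerivAt.comp_hasDerivAt t h1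

theorem coord_cont {γ : ℝ → E3} (h : Continuous γ) (i : Fin 3) :
    Continuous (fun t => γ t i) :=
  (EuclideanSpace.proj i : E3 →L[ℝ] ℝ).continuous.comp h

theorem speed_cont (A : ℝ) {γ : ℝ → E3} (h : ContDiff ℝ 1 γ) :
    Continuous (fun t => Real.sqrt ((deriv γ t 0) ^ 2 + (deriv γ t 1) ^ 2
      + (1 + f A (γ t 1)) * (deriv γ t 2) ^ 2)) := by
  have hd := h.continuous_deriv (le_refl _)
  have h0 := coord_cont hd 0
  have h1 := coord_cont hd 1
  have h2 := coord_cont hd 2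
  have h3 := coord_cont h.continuous 1
  unfold f
  fun_prop

theorem metric_bound (A y : ℝ) :
    (1 + 2 * A) * Real.cos (Real.pi / 2 * y) ^ 2 ≤ 1 + f A y := by
  have h := Real.cos_sq (Real.pi / 2 * y)
  have e : 2 * (Real.pi / 2 * y) = Real.pi * y := by ring
  rw [e] at h
  have := Real.cos_le_one (Real.pi * y)
  unfold f
  rw [h]
  nlinarith

theorem alg_bound (k H S C s c y z v r D : ℝ) (hk : 0 < k) (hv : 0 ≤ v)
    (h1 : S ^ 2 + C ^ 2 = 1) (h2 : s ^ 2 + c ^ 2 = 1)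
    (hvb : y ^ 2 + H ^ 2 * C ^ 2 * z ^ 2 ≤ v ^ 2) (hr0 : 0 < r) (hr : r < 1)
    (hD : D = k * (S * s * y - C * c * H * z)) :
    1 / Real.sqrt (1 - (r * (-(C * s))) ^ 2) * (r * D) ≤ k * v := by
  have hCs : (C * s) ^ 2 ≤ 1 := by nlinarith [sq_nonneg S, sq_nonneg c, sq_nonneg s, sq_nonneg C, mul_nonneg (sq_nonneg C) (sq_nonneg c)]
  have hpos : 0 < 1 - (r * (-(C * s))) ^ 2 := by
    have hr2 : r ^ 2 < 1 := by nlinarith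
    have e : (r * (-(C * s))) ^ 2 = r ^ 2 * (C * s) ^ 2 := by ring
    rw [e]
    nlinarith [sq_nonneg (C * s), sq_nonneg r]
  have hsq := Real.sqrt_pos.2 hpos
  rw [one_div, inv_mul_le_iff₀ hsq]
  have cs : (S * s * y - C * c * H * z) ^ 2 ≤ (1 - (C * s) ^ 2) * v ^ 2 := by
    have e : 1 - (C * s) ^ 2 = S ^ 2 * s ^ 2 + c ^ 2 := by
      linear_combination (-s^2) * h1 - h2
    have : (S * s * y - C * c * H * z) ^ 2 ≤
        (S ^ 2 * s ^ 2 + c ^ 2) * (y ^ 2 + H ^ 2 * C ^ 2 * z ^ 2) := by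
      nlinarith [sq_nonneg (S * s * (C * H * z) + c * y)]
    rw [e]
    exact this.trans (mul_le_mul_of_nonneg_left hvb (by positivity))
  have key : r * (S * s * y - C * c * H * z) ≤ Real.sqrt (1 - (r * (-(C * s))) ^ 2) * v := by
    apply le_of_sq_le_sq_aux
    · rw [mul_pow, mul_pow, Real.sq_sqrt hpos.le]
      have := mul_le_mul_of_nonneg_left cs (sq_nonneg r)
      nlinarith [mul_nonneg (sq_nonneg v) (by nlinarith : 0 ≤ 1 - r ^ 2)]
    · positivity
  rw [hD]
  nlinarith

theorem length_lower (A : ℝ) (hA0 : 0 < A) (b : ℝ) (hb : 0 < b)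
    (hb1 : Real.sqrt (1 + 2 * A) * b ≤ 1) (γ : ℝ → E3) (h : ContDiff ℝ 1 γ)
    (y0 : γ 0 1 = 0) (y1 : γ 1 1 = 0) (z0 : γ 0 2 = b) (z1 : γ 1 2 = -b) :
    2 * b * Real.sqrt (1 + 2 * A) ≤ Lg A γ := by
  set H := Real.sqrt (1 + 2 * A) with hH
  have hH2 : H ^ 2 = 1 + 2 * A := Real.sq_sqrt (by linarith)
  have hHpos : 0 < H := Real.sqrt_pos.2 (by linarith)
  set k := Real.pi / 2 with hk
  have hkpos : 0 < k := by positivity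
  have main : ∀ r : ℝ, 0 < r → r < 1 →
      2 * Real.arcsin (r * Real.sin (k * H * b)) ≤ k * Lg A γ := by
    intro r hr0 hr
    have hder : ∀ t, HasDerivAt
        (fun t => Real.arcsin (r * (-(Real.cos (k * γ t 1) * Real.sin (k * H * γ t 2)))))
        (1 / Real.sqrt (1 - (r * (-(Real.cos (k * γ t 1) * Real.sin (k * H * γ t 2)))) ^ 2) *
          (r * (-((-Real.sin (k * γ t 1) * (k * deriv γ t 1)) * Real.sin (k * H * γ t 2)
            + Real.cos (k * γ t 1) * (Real.cos (k * H * γ t 2) * (k * H * deriv γ t 2)))))) t := by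
      intro t
      have e1 := ((coord_deriv h 1 t).const_mul k).cos
      have e2 := ((coord_deriv h 2 t).const_mul (k * H)).sin
      have e3 := ((e1.mul e2).neg).const_mul r
      have hb : |r * (-(Real.cos (k * γ t 1) * Real.sin (k * H * γ t 2)))| < 1 := by
        rw [abs_mul, abs_neg, abs_mul, abs_of_pos hr0]
        have a1 := Real.abs_cos_le_one (k * γ t 1)
        have a2 := Real.abs_sin_le_one (k * H * γ t 2)
        have := mul_le_one₀ a1 (abs_nonneg _) a2
        nlinarith
      rw [abs_lt] at hb
      exact (Real.hasDerivAt_arcsin hb.1.ne' hb.2.ne).comp t e3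
    have hi := intervalIntegral.sub_le_integral_of_hasDeriv_right_of_le (zero_le_one (α := ℝ))
      (fun t _ => (hder t).continuousAt.continuousWithinAt)
      (fun t _ => (hder t).hasDerivWithinAt)
      (φ := fun t => k * Real.sqrt ((deriv γ t 0) ^ 2 + (deriv γ t 1) ^ 2
        + (1 + f A (γ t 1)) * (deriv γ t 2) ^ 2))
      ((continuous_const.mul (speed_cont A h)).continuousOn.integrableOn_Icc)
      (by
        intro t _
        have hm := metric_bound A (γ t 1)
        have hf : 0 ≤ 1 + f A (γ t 1) := le_trans (by positivity) hm
        apply alg_bound k H (Real.sin (k * γ t 1)) (Real.cos (k * γ t 1))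
          (Real.sin (k * H * γ t 2)) (Real.cos (k * H * γ t 2)) (deriv γ t 1) (deriv γ t 2)
          _ r _ hkpos (Real.sqrt_nonneg _) (Real.sin_sq_add_cos_sq _) (Real.sin_sq_add_cos_sq _)
          _ hr0 hr (by ring)
        rw [hH2, Real.sq_sqrt (by positivity)]
        rw [← hk] at hm
        have := mul_le_mul_of_nonneg_right hm (sq_nonneg (deriv γ t 2))
        nlinarith [sq_nonneg (deriv γ t 0)])
    rw [intervalIntegral.integral_const_mul] at hi
    simp only [y0, y1, z0, z1, mul_zero, Real.cos_zero, one_mul, mul_neg, Real.sin_neg,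
      neg_neg, Real.arcsin_neg] at hi
    unfold Lg
    linarith
  have lim : 2 * Real.arcsin (1 * Real.sin (k * H * b)) ≤ k * Lg A γ := by
    have hc : Filter.Tendsto (fun r : ℝ => 2 * Real.arcsin (r * Real.sin (k * H * b)))
        (nhdsWithin 1 (Set.Iio 1)) (nhds (2 * Real.arcsin (1 * Real.sin (k * H * b)))) := by
      apply Filter.Tendsto.mono_left _ nhdsWithin_le_nhds
      apply Continuous.tendsto
      have := Real.continuous_arcsin
      fun_prop
    apply le_of_tendsto hc
    filter_upwards [Ioo_mem_nhdsLT (zero_lt_one (α := ℝ))] with r hr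
    exact main r hr.1 hr.2
  rw [one_mul, Real.arcsin_sin] at lim
  · have : k * (2 * b * H) ≤ k * Lg A γ := by linarith
    exact le_of_mul_le_mul_left this hkpos
  · have : 0 < k * H * b := by positivity
    linarith
  · have := mul_le_mul_of_nonneg_left hb1 hkpos.le
    linarith

theorem line_props (p q : E3) :
    ContDiff ℝ 1 (fun t : ℝ => p + t • (q - p)) ∧
    ∀ t : ℝ, deriv (fun t : ℝ => p + t • (q - p)) t = q - p := by
  refine ⟨by fun_prop, fun t => ?_⟩
  have : HasDerivAt (fun t : ℝ => p + t • (q - p)) ((1:ℝ) • (q - p)) t :=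
    ((hasDerivAt_id t).smul_const (q - p)).const_add p
  rw [this.deriv, one_smul]

theorem Lg_nonneg (A : ℝ) (γ : ℝ → E3) : 0 ≤ Lg A γ :=
  intervalIntegral.integral_nonneg zero_le_one (fun _ _ => Real.sqrt_nonneg _)

theorem dg_x_le (A c : ℝ) (hc : 0 ≤ c) : dg A (pt (-c) 0 0) (pt c 0 0) ≤ 2 * c := by
  obtain ⟨h1, h2⟩ := line_props (pt (-c) 0 0) (pt c 0 0)
  apply csInf_le
  · exact ⟨0, by rintro _ ⟨γ, _, _, _, rfl⟩; exact Lg_nonneg A γ⟩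
  · refine ⟨_, h1, by simp, by simp, ?_⟩
    unfold Lg
    simp only [h2]
    have e0 : (pt c 0 0 - pt (-c) 0 0) 0 = 2 * c := by simp [pt]; ring
    have e1 : (pt c 0 0 - pt (-c) 0 0) 1 = 0 := by simp [pt]
    have e2 : (pt c 0 0 - pt (-c) 0 0) 2 = 0 := by simp [pt]
    simp only [e0, e1, e2]
    simp [Real.sqrt_sq, hc]

theorem dg_z_ge (A b : ℝ) (hA0 : 0 < A) (hb : 0 < b)
    (hb1 : Real.sqrt (1 + 2 * A) * b ≤ 1) :
    2 * b * Real.sqrt (1 + 2 * A) ≤ dg A (pt 0 0 b) (pt 0 0 (-b)) := by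
  apply le_csInf
  · obtain ⟨h1, h2⟩ := line_props (pt 0 0 b) (pt 0 0 (-b))
    exact ⟨_, _, h1, by simp, by simp, rfl⟩
  · rintro _ ⟨γ, h, h0, h1, rfl⟩
    apply length_lower A hA0 b hb hb1 γ h
    · rw [h0]; simp [pt]
    · rw [h1]; simp [pt]
    · rw [h0]; simp [pt]
    · rw [h1]; simp [pt]

/-- For sufficiently small `ε` and any `0 ≤ ξ < ξ₀`, the geodesic distance
between the two points on the `x`-axis is strictly smaller than the geodesic
distance between the two points on the `z`-axis. -/
theorem dg_pw_lt_dg_uv (A : ℝ) (hA0 : 0 < A) (hA : A ≤ 3 / 8) :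
    ∃ ε₀ > (0:ℝ), ∀ ε ξ : ℝ, 0 < ε → ε < ε₀ → 0 ≤ ξ → ξ < ξ₀ A →
      dg A (pt (-(a * ε * (1 + ξ))) 0 0) (pt (a * ε * (1 + ξ)) 0 0)
        < dg A (pt 0 0 (a * ε)) (pt 0 0 (-(a * ε))) := by
  have hf0 : f A 0 = 2 * A := by simp [f]; ring
  have ha : 0 < a := by unfold a; positivity
  have ha2 : a ^ 2 = 1 / 2 := by unfold a; rw [div_pow, Real.sq_sqrt (by norm_num)]; norm_num
  refine ⟨1, one_pos, fun ε ξ hε hε1 hξ hξ1 => ?_⟩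
  unfold ξ₀ at hξ1
  rw [hf0] at hξ1
  have hb : 0 < a * ε := by positivity
  have hH : 0 ≤ Real.sqrt (1 + 2 * A) := Real.sqrt_nonneg _
  have hH2 : Real.sqrt (1 + 2 * A) ^ 2 = 1 + 2 * A := Real.sq_sqrt (by linarith)
  have hHa : Real.sqrt (1 + 2 * A) * a ≤ 1 := by
    have : (Real.sqrt (1 + 2 * A) * a) ^ 2 ≤ 1 := by rw [mul_pow, hH2, ha2]; linarith
    nlinarith
  have hb1 : Real.sqrt (1 + 2 * A) * (a * ε) ≤ 1 := by
    rw [← mul_assoc]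
    have : 0 ≤ Real.sqrt (1 + 2 * A) * a := by positivity
    nlinarith
  have h1 := dg_x_le A (a * ε * (1 + ξ)) (by positivity)
  have h2 := dg_z_ge A (a * ε) hA0 hb hb1
  have h3 := mul_lt_mul_of_pos_left (show 1 + ξ < Real.sqrt (1 + 2 * A) by linarith) hb
  linarith
end
end

section
/- Fix an integer m > 2 and consider ℝ^m with the generalized metric in which the m-th coordinate direction is scaled by 1 + f of the (m−1)-st coordinate. Then for all p, q ∈ ℝ^m the geodesic distance satisfies ‖p − q‖ ≤ d_g(p, q); and if moreover the m-th coordinates of p and q are equal (p_m = q_m), then d_g(p, q) = ‖p − q‖. -/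
open Real MeasureTheory

noncomputable section

/-- The g-length of a path `γ : ℝ → ℝᵐ` in the metric where the `m`-th
coordinate direction is scaled by `1 + f` of the `(m−1)`-st coordinate:
`L_g(γ) = ∫₀¹ √( Σ_{i=1}^{m−1} γᵢ′(t)² + (1 + f(γ_{m−1}(t))) γ_m′(t)² ) dt`. -/
def LgM (m : ℕ) (hm : 2 < m) (A : ℝ) (γ : ℝ → EuclideanSpace ℝ (Fin m)) : ℝ :=
  ∫ t in (0:ℝ)..1,
    Real.sqrt
      ((∑ i ∈ Finset.univ.erase (⟨m - 1, by omega⟩ : Fin m), (deriv γ t i) ^ 2)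
        + (1 + f A (γ t ⟨m - 2, by omega⟩)) * (deriv γ t ⟨m - 1, by omega⟩) ^ 2)

/-- The geodesic distance on `ℝᵐ`: the infimum of g-lengths of C¹ paths from
`p` to `q`. -/
def dgM (m : ℕ) (hm : 2 < m) (A : ℝ) (p q : EuclideanSpace ℝ (Fin m)) : ℝ :=
  sInf {L : ℝ | ∃ γ : ℝ → EuclideanSpace ℝ (Fin m),
    ContDiff ℝ 1 γ ∧ γ 0 = p ∧ γ 1 = q ∧ L = LgM m hm A γ}

theorem f_nonneg_aux (A y : ℝ) (hA0 : 0 < A) : 0 ≤ f A y := by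
  unfold f
  have := Real.neg_one_le_cos (Real.pi * y)
  exact mul_nonneg hA0.le (by linarith)

theorem LgM_ge_aux (m : ℕ) (hm : 2 < m) (A : ℝ) (hA0 : 0 < A)
    (γ : ℝ → EuclideanSpace ℝ (Fin m)) (hγ : ContDiff ℝ 1 γ) :
    ‖γ 0 - γ 1‖ ≤ LgM m hm A γ := by
  have hd : Continuous (deriv γ) := hγ.continuous_deriv le_rfl
  have hc : Continuous γ := hγ.continuous
  have hdi : ∀ i, Continuous fun t => deriv γ t i := fun i =>
    (EuclideanSpace.proj (𝕜 := ℝ) i).continuous.comp hd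
  have hci : ∀ i, Continuous fun t => γ t i := fun i =>
    (EuclideanSpace.proj (𝕜 := ℝ) i).continuous.comp hc
  have h1 : ∫ t in (0:ℝ)..1, deriv γ t = γ 1 - γ 0 :=
    intervalIntegral.integral_deriv_eq_sub
      (fun t _ => (hγ.differentiable one_ne_zero) t) (hd.intervalIntegrable _ _)
  rw [norm_sub_rev, ← h1]
  refine (intervalIntegral.norm_integral_le_integral_norm zero_le_one).trans ?_
  unfold LgM
  refine intervalIntegral.integral_mono_on zero_le_one (hd.norm.intervalIntegrable _ _) ?_ ?_
  · apply Continuous.intervalIntegrable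
    have h2 := hci ⟨m - 2, by omega⟩
    have h3 := hdi ⟨m - 1, by omega⟩
    unfold f
    refine Real.continuous_sqrt.comp ?_
    refine (continuous_finset_sum _ fun i _ => (hdi i).pow 2).add ?_
    refine Continuous.mul ?_ (h3.pow 2)
    fun_prop
  · intro t _
    rw [EuclideanSpace.norm_eq]
    apply Real.sqrt_le_sqrt
    simp only [Real.norm_eq_abs, sq_abs]
    rw [← Finset.sum_erase_add _ _ (Finset.mem_univ (⟨m - 1, by omega⟩ : Fin m))]
    have := mul_nonneg (f_nonneg_aux A (γ t ⟨m - 2, by omega⟩) hA0)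
      (sq_nonneg (deriv γ t ⟨m - 1, by omega⟩))
    linarith

theorem line_aux (m : ℕ) (p q : EuclideanSpace ℝ (Fin m)) :
    ContDiff ℝ 1 (fun t : ℝ => p + t • (q - p)) := by
  fun_prop

/-- In dimension `m > 2`, the geodesic distance is bounded below by the
Euclidean distance, with equality when the `m`-th coordinates agree. -/
theorem dgM_bounds (m : ℕ) (hm : 2 < m) (A : ℝ) (hA0 : 0 < A) (hA : A ≤ 3 / 8)
    (p q : EuclideanSpace ℝ (Fin m)) :
    ‖p - q‖ ≤ dgM m hm A p q ∧
    (p ⟨m - 1, by omega⟩ = q ⟨m - 1, by omega⟩ → dgM m hm A p q = ‖p - q‖) := by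
  have hne : {L : ℝ | ∃ γ : ℝ → EuclideanSpace ℝ (Fin m),
      ContDiff ℝ 1 γ ∧ γ 0 = p ∧ γ 1 = q ∧ L = LgM m hm A γ}.Nonempty :=
    ⟨_, fun t : ℝ => p + t • (q - p), line_aux m p q, by simp, by simp, rfl⟩
  have hlb : ∀ L ∈ {L : ℝ | ∃ γ : ℝ → EuclideanSpace ℝ (Fin m),
      ContDiff ℝ 1 γ ∧ γ 0 = p ∧ γ 1 = q ∧ L = LgM m hm A γ}, ‖p - q‖ ≤ L := by
    rintro L ⟨γ, h, h0, h1, rfl⟩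
    have := LgM_ge_aux m hm A hA0 γ h
    rwa [h0, h1] at this
  have hle : ‖p - q‖ ≤ dgM m hm A p q := le_csInf hne hlb
  refine ⟨hle, fun hpq => le_antisymm ?_ hle⟩
  refine csInf_le ⟨_, hlb⟩
    ⟨fun t : ℝ => p + t • (q - p), line_aux m p q, by simp, by simp, ?_⟩
  have hder : ∀ t : ℝ, deriv (fun t : ℝ => p + t • (q - p)) t = q - p := by
    intro t
    have := ((hasDerivAt_id t).smul_const (q - p)).const_add p
    simpa using this.deriv
  unfold LgM
  simp only [hder]
  have hz : (q - p) ⟨m - 1, by omega⟩ = 0 := by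
    simp [hpq]
  rw [hz, norm_sub_rev, EuclideanSpace.norm_eq,
    ← Finset.sum_erase_add _ _ (Finset.mem_univ (⟨m - 1, by omega⟩ : Fin m)), hz]
  simp
end
end
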